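/- For each n, let a = √((3/7)n), let f : ℝ₊ → ℝ₊ be defined by f(x) = log a for 0 ≤ x ≤ a, f(x) = log x for a ≤ x ≤ 2a, and f(x) = √x − √(2a) + log(2a) for x ≥ 2a, and let N ≥ n^{5/2} log²n. Let X have density proportional to e^{-(n-1)f(|x|)} and let X̃ have density proportional to (1 − (n−1)f(|x|)/N)₊^N on ℝⁿ. Then: (i) ∫ x_i x_j dμ̃(x) = (1+ε'_n)δ_{ij} for all i,j with |ε'_n| ≤ C/√n; and (ii) for every t ∈ ℝ, |P(|X| ≤ t) − P(|X̃| ≤ t)| ≤ C/√n, where C > 0 is a universal constant. -/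

import Mathlib

open MeasureTheory Real

/-- The radial profile: `log a` on `[0,a]`, `log x` on `[a,2a]`,
`√x - √(2a) + log(2a)` on `[2a,∞)`. -/
noncomputable def radialF (a x : ℝ) : ℝ :=
  if x ≤ a then Real.log a
  else if x ≤ 2 * a then Real.log x
  else Real.sqrt x - Real.sqrt (2 * a) + Real.log (2 * a)



lemma nrm_eq (n : ℕ) (x : Fin n → ℝ) : Real.sqrt (∑ i, (x i) ^ 2) = ‖WithLp.toLp 2 x‖ := by
  rw [EuclideanSpace.norm_eq]; simp

lemma radial_integral (n : ℕ) (hn : 1 ≤ n) : ∃ c : ℝ, ∀ φ : ℝ → ℝ,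
    ∫ x : Fin n → ℝ, φ (Real.sqrt (∑ i, (x i) ^ 2)) =
      c * ∫ r in Set.Ioi (0:ℝ), r ^ (n - 1) * φ r := by
  have : Nonempty (Fin n) := ⟨⟨0, hn⟩⟩
  refine ⟨n * (volume : Measure (EuclideanSpace ℝ (Fin n))).real (Metric.ball 0 1), fun φ => ?_⟩
  have h := integral_fun_norm_addHaar (volume : Measure (EuclideanSpace ℝ (Fin n))) φ
  rw [← (PiLp.volume_preserving_toLp (Fin n)).integral_comp
    (MeasurableEquiv.toLp 2 _).measurableEmbedding] at h
  simp only [nrm_eq]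
  rw [h]
  simp [mul_assoc]

lemma radial_integrable (n : ℕ) (hn : 1 ≤ n) (φ : ℝ → ℝ)
    (h : IntegrableOn (fun r => r ^ (n - 1) * φ r) (Set.Ioi 0)) :
    Integrable (fun x : Fin n → ℝ => φ (Real.sqrt (∑ i, (x i) ^ 2))) := by
  have : Nonempty (Fin n) := ⟨⟨0, hn⟩⟩
  have h2 := (integrable_fun_norm_addHaar (volume : Measure (EuclideanSpace ℝ (Fin n)))
    (f := φ)).2 (by simpa using h)
  rw [← (PiLp.volume_preserving_toLp (Fin n)).integrable_comp_emb
    (MeasurableEquiv.toLp 2 _).measurableEmbedding] at h2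
  simp only [nrm_eq]
  exact h2

lemma dens_integral (n : ℕ) (h : ℝ → ℝ) (hm : Measurable h) (h0 : ∀ r, 0 ≤ h r)
    (C : ℝ) (μ : Measure (Fin n → ℝ))
    (hμ : μ = (volume : Measure (Fin n → ℝ)).withDensity
      (fun x => ENNReal.ofReal (C * h (Real.sqrt (∑ i, (x i) ^ 2)))))
    (hp : IsProbabilityMeasure μ) (φ : (Fin n → ℝ) → ℝ) :
    ∫ x, φ x ∂μ = C * ∫ x, h (Real.sqrt (∑ i, (x i) ^ 2)) * φ x := by
  have hC : 0 ≤ C := by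
    by_contra hC
    push Not at hC
    have : μ = 0 := by
      rw [hμ]
      convert withDensity_zero (μ := (volume : Measure (Fin n → ℝ))) using 2
      ext x
      simp only [Pi.zero_apply, ENNReal.ofReal_eq_zero]
      exact mul_nonpos_of_nonpos_of_nonneg hC.le (h0 _)
    have h1 := hp.measure_univ
    simp [this] at h1
  rw [hμ, integral_withDensity_eq_integral_toReal_smul (by fun_prop) (by simp)]
  rw [← integral_const_mul]
  congr 1
  ext x
  rw [ENNReal.toReal_ofReal (mul_nonneg hC (h0 _)), smul_eq_mul, mul_assoc]

lemma dens_radial (n : ℕ) (hn : 1 ≤ n) (h : ℝ → ℝ) (hm : Measurable h) (h0 : ∀ r, 0 ≤ h r)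
    (C : ℝ) (μ : Measure (Fin n → ℝ))
    (hμ : μ = (volume : Measure (Fin n → ℝ)).withDensity
      (fun x => ENNReal.ofReal (C * h (Real.sqrt (∑ i, (x i) ^ 2)))))
    (hp : IsProbabilityMeasure μ) (φ : ℝ → ℝ) :
    ∫ x, φ (Real.sqrt (∑ i, (x i) ^ 2)) ∂μ =
      (∫ r in Set.Ioi (0:ℝ), r ^ (n - 1) * (h r * φ r)) /
      (∫ r in Set.Ioi (0:ℝ), r ^ (n - 1) * h r) := by
  obtain ⟨c, hc⟩ := radial_integral n hn
  have h1 := dens_integral n h hm h0 C μ hμ hp (fun _ => 1)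
  have h2 := dens_integral n h hm h0 C μ hμ hp (fun x => φ (Real.sqrt (∑ i, (x i) ^ 2)))
  rw [hc (fun r => h r * φ r)] at h2
  simp only [mul_one] at h1
  rw [hc (fun r => h r)] at h1
  simp only [integral_const, probReal_univ, smul_eq_mul, mul_one] at h1
  rw [h2]
  set Q := (∫ r in Set.Ioi (0:ℝ), r ^ (n - 1) * h r)
  have hQ : Q ≠ 0 := by
    intro hQ; simp [hQ] at h1
  rw [eq_div_iff hQ]
  linear_combination (- ∫ r in Set.Ioi (0:ℝ), r ^ (n - 1) * (h r * φ r)) * h1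

lemma dens_prob (n : ℕ) (hn : 1 ≤ n) (h : ℝ → ℝ) (hm : Measurable h) (h0 : ∀ r, 0 ≤ h r)
    (C : ℝ) (μ : Measure (Fin n → ℝ))
    (hμ : μ = (volume : Measure (Fin n → ℝ)).withDensity
      (fun x => ENNReal.ofReal (C * h (Real.sqrt (∑ i, (x i) ^ 2)))))
    (hp : IsProbabilityMeasure μ) (t : ℝ) :
    (μ {x | Real.sqrt (∑ i, (x i) ^ 2) ≤ t}).toReal =
      (∫ r in Set.Ioi (0:ℝ), r ^ (n - 1) * (h r * (Set.Iic t).indicator 1 r)) /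
      (∫ r in Set.Ioi (0:ℝ), r ^ (n - 1) * h r) := by
  rw [← dens_radial n hn h hm h0 C μ hμ hp]
  have : MeasurableSet {x : Fin n → ℝ | Real.sqrt (∑ i, (x i) ^ 2) ≤ t} :=
    measurableSet_le (by fun_prop) (by fun_prop)
  have h3 := integral_indicator_one (μ := μ) this
  rw [← measureReal_def, ← h3]
  rfl

lemma dens_iso (n : ℕ) (hn : 1 ≤ n) (h : ℝ → ℝ) (hm : Measurable h) (h0 : ∀ r, 0 ≤ h r)
    (C : ℝ) (μ : Measure (Fin n → ℝ))
    (hμ : μ = (volume : Measure (Fin n → ℝ)).withDensity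
      (fun x => ENNReal.ofReal (C * h (Real.sqrt (∑ i, (x i) ^ 2)))))
    (hp : IsProbabilityMeasure μ)
    (hi : IntegrableOn (fun r => r ^ (n - 1) * (h r * r ^ 2)) (Set.Ioi 0)) (i j : Fin n) :
    ∫ x, x i * x j ∂μ = (∫ r in Set.Ioi (0:ℝ), r ^ (n - 1) * (h r * r ^ 2)) /
      (n * (∫ r in Set.Ioi (0:ℝ), r ^ (n - 1) * h r)) * (if i = j then 1 else 0) := by
  -- transfer to Euclidean space
  have key : ∀ (T : EuclideanSpace ℝ (Fin n) ≃ₗᵢ[ℝ] EuclideanSpace ℝ (Fin n)) (i j : Fin n),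
      ∫ x : Fin n → ℝ, h (Real.sqrt (∑ i, (x i) ^ 2)) * (x i * x j) =
      ∫ x : Fin n → ℝ, h (Real.sqrt (∑ i, (x i) ^ 2)) *
        ((T (WithLp.toLp 2 x)) i * (T (WithLp.toLp 2 x)) j) := by
    intro T i j
    simp only [nrm_eq]
    have e1 := (PiLp.volume_preserving_toLp (Fin n)).integral_comp
      (MeasurableEquiv.toLp 2 _).measurableEmbedding
      (fun x : EuclideanSpace ℝ (Fin n) => h ‖x‖ * (x i * x j))
    have e2 := (PiLp.volume_preserving_toLp (Fin n)).integral_comp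
      (MeasurableEquiv.toLp 2 _).measurableEmbedding
      (fun x : EuclideanSpace ℝ (Fin n) => h ‖x‖ * (T x i * T x j))
    refine e1.trans (Eq.trans ?_ e2.symm)
    have e3 := T.measurePreserving.integral_comp T.toHomeomorph.measurableEmbedding
      (fun x : EuclideanSpace ℝ (Fin n) => h ‖x‖ * (x i * x j))
    rw [← e3]
    simp
  split_ifs with hij
  · subst hij
    have hswap : ∀ k, ∫ x, x k * x k ∂μ = ∫ x, x i * x i ∂μ := by
      intro k
      rw [dens_integral n h hm h0 C μ hμ hp, dens_integral n h hm h0 C μ hμ hp,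
        key (LinearIsometryEquiv.piLpCongrLeft 2 ℝ ℝ (Equiv.swap i k)) k k]
      simp [LinearIsometryEquiv.piLpCongrLeft_apply, Equiv.piCongrLeft']
    have hint : ∀ k, Integrable (fun x : Fin n → ℝ => x k * x k) μ := by
      intro k
      rw [hμ, integrable_withDensity_iff_integrable_smul' (by fun_prop) (by simp)]
      have := radial_integrable n hn (fun r => h r * r ^ 2) hi
      refine (this.const_mul |C|).mono' (by fun_prop) ?_
      filter_upwards with x
      rw [Real.sq_sqrt (Finset.sum_nonneg fun i _ => sq_nonneg _), smul_eq_mul, norm_mul,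
        ← mul_assoc]
      have hk : ‖x k * x k‖ ≤ ∑ i, x i ^ 2 := by
        rw [Real.norm_of_nonneg (mul_self_nonneg _), ← sq]
        exact Finset.single_le_sum (f := fun i => x i ^ 2) (fun i _ => sq_nonneg _)
          (Finset.mem_univ k)
      refine mul_le_mul ?_ hk (norm_nonneg _) (mul_nonneg (abs_nonneg _) (h0 _))
      rw [Real.norm_of_nonneg ENNReal.toReal_nonneg]
      by_cases hC : 0 ≤ C
      · rw [ENNReal.toReal_ofReal (mul_nonneg hC (h0 _)), abs_of_nonneg hC]
      · push Not at hC
        rw [ENNReal.ofReal_of_nonpos (mul_nonpos_of_nonpos_of_nonneg hC.le (h0 _))]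
        exact mul_nonneg (abs_nonneg _) (h0 _)
    have hsum : ∫ x, (Real.sqrt (∑ i, (x i) ^ 2)) ^ 2 ∂μ = n * ∫ x, x i * x i ∂μ := by
      have : (fun x : Fin n → ℝ => (Real.sqrt (∑ i, (x i) ^ 2)) ^ 2) =
          fun x => ∑ k, x k * x k := by
        ext x
        rw [Real.sq_sqrt (Finset.sum_nonneg fun i _ => sq_nonneg _)]
        simp [sq]
      rw [this, integral_finsetSum _ (fun k _ => hint k), Finset.sum_congr rfl (fun k _ => hswap k)]
      simp
    rw [dens_radial n hn h hm h0 C μ hμ hp (fun r => r ^ 2)] at hsum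
    have : (n:ℝ) ≠ 0 := by positivity
    rw [mul_one, mul_comm (n:ℝ), ← div_div, hsum]
    field_simp
  · rw [mul_zero, dens_integral n h hm h0 C μ hμ hp]
    have := key (LinearIsometryEquiv.piLpCongrRight 2
      (fun k => if k = i then LinearIsometryEquiv.neg ℝ else LinearIsometryEquiv.refl ℝ ℝ)) i j
    have hji : j ≠ i := fun h => hij h.symm
    simp [LinearIsometryEquiv.piLpCongrRight_apply, hji, integral_neg] at this
    have h4 : ∫ x : Fin n → ℝ, h (Real.sqrt (∑ i, (x i) ^ 2)) * (x i * x j) = 0 := by linarith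
    rw [h4, mul_zero]

noncomputable def EE (n : ℕ) (r : ℝ) : ℝ :=
  Real.exp (-((n : ℝ) - 1) * radialF (Real.sqrt (3 / 7 * n)) r)

noncomputable def HH (n : ℕ) (N r : ℝ) : ℝ :=
  (max (1 - ((n : ℝ) - 1) * radialF (Real.sqrt (3 / 7 * n)) r / N) 0) ^ N

lemma radialF_meas (a : ℝ) : Measurable (radialF a) := by
  unfold radialF
  refine Measurable.ite measurableSet_Iic (by fun_prop) ?_
  exact Measurable.ite measurableSet_Iic (by fun_prop) (by fun_prop)

lemma EE_meas (n : ℕ) : Measurable (EE n) := by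
  have := radialF_meas (Real.sqrt (3 / 7 * n))
  unfold EE; fun_prop

lemma HH_meas (n : ℕ) (N : ℝ) : Measurable (HH n N) := by
  have := radialF_meas (Real.sqrt (3 / 7 * n))
  unfold HH; fun_prop

lemma HH_nonneg (n : ℕ) (N r : ℝ) : 0 ≤ HH n N r := Real.rpow_nonneg (le_max_right _ _) _

lemma EE_nonneg (n : ℕ) (r : ℝ) : 0 ≤ EE n r := (Real.exp_pos _).le

lemma poly_le_exp (g N : ℝ) (hN : 0 < N) : (max (1 - g / N) 0) ^ N ≤ Real.exp (-g) := by
  have h1 : max (1 - g / N) 0 ≤ Real.exp (-(g / N)) :=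
    max_le (by linarith [Real.add_one_le_exp (-(g / N))]) (Real.exp_pos _).le
  refine (Real.rpow_le_rpow (le_max_right _ _) h1 hN.le).trans_eq ?_
  rw [← Real.exp_mul]
  congr 1
  field_simp

lemma poly_ge_exp (g N : ℝ) (hN : 1 ≤ N) (hg : 0 ≤ g) :
    Real.exp (-g) * (1 - g ^ 2 / N) ≤ (max (1 - g / N) 0) ^ N := by
  have hN0 : 0 < N := by linarith
  rcases le_or_gt N g with h | h
  · have h1 : 1 ≤ g ^ 2 / N := by
      rw [le_div_iff₀ hN0]; nlinarith
    exact (mul_nonpos_of_nonneg_of_nonpos (Real.exp_pos _).le (by linarith)).trans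
      (Real.rpow_nonneg (le_max_right _ _) _)
  · set u := g / N with hu
    have hu0 : 0 ≤ u := by positivity
    have hu1 : u < 1 := by rw [hu, div_lt_one hN0]; exact h
    have h1 : Real.exp (-u) * (1 - u ^ 2) ≤ 1 - u := by
      have h2 : (1 + u) ≤ Real.exp u := by linarith [Real.add_one_le_exp u]
      have h3 : Real.exp (-u) * Real.exp u = 1 := by rw [← Real.exp_add]; simp
      have h4 := Real.exp_pos (-u)
      have h5 : Real.exp (-u) * (1 + u) ≤ 1 := by nlinarith
      nlinarith
    have h6 := one_add_mul_self_le_rpow_one_add (s := -u ^ 2) (by nlinarith) hN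
    have h7 : (0:ℝ) ≤ 1 - u ^ 2 := by nlinarith
    calc Real.exp (-g) * (1 - g ^ 2 / N) ≤ (Real.exp (-u)) ^ N * (1 - u ^ 2) ^ N := by
          have e1 : Real.exp (-g) = (Real.exp (-u)) ^ N := by
            rw [← Real.exp_mul]; congr 1; rw [hu]; field_simp
          rw [e1]
          refine mul_le_mul_of_nonneg_left ?_ (by positivity)
          have e2 : 1 - g ^ 2 / N = 1 + N * -u ^ 2 := by rw [hu]; field_simp; ring
          rw [e2, sub_eq_add_neg 1 (u ^ 2)]
          exact h6
      _ = (Real.exp (-u) * (1 - u ^ 2)) ^ N := by rw [Real.mul_rpow (Real.exp_pos _).le h7]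
      _ ≤ _ := Real.rpow_le_rpow (by positivity) (h1.trans (le_max_left _ _)) hN0.le

lemma HH_le_EE (n : ℕ) (N r : ℝ) (hN : 0 < N) : HH n N r ≤ EE n r := by
  have := poly_le_exp (((n : ℝ) - 1) * radialF (Real.sqrt (3 / 7 * n)) r) N hN
  unfold HH EE
  rwa [neg_mul]

lemma exp_neg_log (n : ℕ) (hn : 1 ≤ n) (y : ℝ) (hy : 0 < y) :
    Real.exp (-((n : ℝ) - 1) * Real.log y) = (y ^ (n - 1))⁻¹ := by
  have : (n : ℝ) - 1 = ((n - 1 : ℕ) : ℝ) := by push_cast [hn]; ring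
  rw [this, neg_mul, Real.exp_neg, mul_comm, Real.exp_mul, Real.exp_log hy, Real.rpow_natCast]

lemma a_pos (n : ℕ) (hn : 1 ≤ n) : 0 < Real.sqrt (3 / 7 * n) := by
  have : (0:ℝ) < n := by positivity
  positivity

lemma p_inner (n : ℕ) (hn : 1 ≤ n) (r : ℝ) (hr : r ≤ Real.sqrt (3 / 7 * n)) :
    r ^ (n - 1) * EE n r = r ^ (n - 1) / Real.sqrt (3 / 7 * n) ^ (n - 1) := by
  rw [EE, radialF, if_pos hr, exp_neg_log n hn _ (a_pos n hn)]
  rfl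

lemma p_mid (n : ℕ) (hn : 1 ≤ n) (r : ℝ) (hr : Real.sqrt (3 / 7 * n) < r)
    (hr2 : r ≤ 2 * Real.sqrt (3 / 7 * n)) :
    r ^ (n - 1) * EE n r = 1 := by
  have h0 : 0 < r := (a_pos n hn).trans hr
  rw [EE, radialF, if_neg (not_le.2 hr), if_pos hr2, exp_neg_log n hn _ h0]
  field_simp

lemma p_le_one (n : ℕ) (hn : 1 ≤ n) (r : ℝ) (h0 : 0 < r) (hr2 : r ≤ 2 * Real.sqrt (3 / 7 * n)) :
    r ^ (n - 1) * EE n r ≤ 1 := by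
  rcases le_or_gt r (Real.sqrt (3 / 7 * n)) with h | h
  · rw [p_inner n hn r h]
    have := a_pos n hn
    rw [div_le_one (by positivity)]
    exact pow_le_pow_left₀ h0.le h _
  · exact (p_mid n hn r h hr2).le

lemma EE_outer (n : ℕ) (hn : 1 ≤ n) (r : ℝ) (hr : 2 * Real.sqrt (3 / 7 * n) < r) :
    EE n r = Real.exp (-((n : ℝ) - 1) *
      (Real.sqrt r - Real.sqrt (2 * Real.sqrt (3 / 7 * n)) + Real.log (2 * Real.sqrt (3 / 7 * n)))) := by
  have := a_pos n hn
  rw [EE, radialF, if_neg (by linarith), if_neg (by linarith)]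

lemma tail_crude (n : ℕ) (hn : 2 ≤ n) (k : ℕ) : ∃ K : ℝ, 0 ≤ K ∧
    ∀ r, 2 * Real.sqrt (3 / 7 * n) < r → r ^ (n - 1) * (EE n r * r ^ k) ≤ K * r ^ (-2 : ℝ) := by
  set b := Real.sqrt (2 * Real.sqrt (3 / 7 * n)) with hb
  set l := Real.log (2 * Real.sqrt (3 / 7 * n)) with hl
  refine ⟨Real.exp (-((n : ℝ) - 1) * (-b + l)) * (2 * (n + 1 + k)).factorial, by positivity, ?_⟩
  intro r hr
  have ha := a_pos n (by omega)
  have hr0 : 0 < r := by linarith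
  have hn' : (2:ℝ) ≤ n := by exact_mod_cast hn
  have h1 : EE n r ≤ Real.exp (-((n : ℝ) - 1) * (-b + l)) * Real.exp (-Real.sqrt r) := by
    rw [EE_outer n (by omega) r hr, ← Real.exp_add, Real.exp_le_exp, ← hb, ← hl]
    nlinarith [Real.sqrt_nonneg r]
  have h2 : Real.exp (-Real.sqrt r) ≤ (2 * (n + 1 + k)).factorial / r ^ (n + 1 + k) := by
    have h3 := Real.pow_div_factorial_le_exp (Real.sqrt r) (Real.sqrt_nonneg r) (2 * (n + 1 + k))
    rw [pow_mul, Real.sq_sqrt hr0.le] at h3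
    rw [Real.exp_neg, inv_le_comm₀ (Real.exp_pos _) (by positivity), inv_div]
    exact h3
  have h4 : EE n r ≤ Real.exp (-((n : ℝ) - 1) * (-b + l)) *
      ((2 * (n + 1 + k)).factorial / r ^ (n + 1 + k)) :=
    h1.trans (mul_le_mul_of_nonneg_left h2 (Real.exp_pos _).le)
  calc r ^ (n - 1) * (EE n r * r ^ k) ≤ r ^ (n - 1) * ((Real.exp (-((n : ℝ) - 1) * (-b + l)) *
      ((2 * (n + 1 + k)).factorial / r ^ (n + 1 + k))) * r ^ k) := by gcongr
    _ = _ := by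
      have e : r ^ (n + 1 + k) = r ^ (n - 1) * r ^ k * r ^ 2 := by
        rw [← pow_add, ← pow_add]; congr 1; omega
      rw [e, Real.rpow_neg hr0.le, Real.rpow_ofNat]
      field_simp

lemma p_integrable (n : ℕ) (hn : 2 ≤ n) (k : ℕ) :
    IntegrableOn (fun r => r ^ (n - 1) * (EE n r * r ^ k)) (Set.Ioi 0) := by
  have ha := a_pos n (by omega)
  have hm := EE_meas n
  rw [← Set.Ioc_union_Ioi_eq_Ioi (show (0:ℝ) ≤ 2 * Real.sqrt (3 / 7 * n) by positivity)]
  refine IntegrableOn.union ?_ ?_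
  · refine Measure.integrableOn_of_bounded (M := (2 * Real.sqrt (3 / 7 * n)) ^ k) measure_Ioc_lt_top.ne
      (by fun_prop) ?_
    rw [ae_restrict_iff' measurableSet_Ioc]
    filter_upwards with r hr
    have h0 := hr.1
    have h1 := p_le_one n (by omega) r hr.1 hr.2
    have h2 := EE_nonneg n r
    rw [Real.norm_of_nonneg (by positivity), ← mul_assoc]
    calc _ ≤ 1 * r ^ k := by gcongr
      _ ≤ _ := by rw [one_mul]; exact pow_le_pow_left₀ h0.le hr.2 _
  · obtain ⟨K, hK, h⟩ := tail_crude n hn k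
    refine Integrable.mono' ((integrableOn_Ioi_rpow_of_lt (a := -2) (by norm_num)
      (show 0 < 2 * Real.sqrt (3 / 7 * n) by positivity)).const_mul K) (by fun_prop) ?_
    rw [ae_restrict_iff' measurableSet_Ioi]
    filter_upwards with r hr
    have h0 : 0 < r := lt_trans (by positivity) (Set.mem_Ioi.1 hr)
    have h2 := EE_nonneg n r
    rw [Real.norm_of_nonneg (by positivity)]
    exact h r hr

lemma q_integrable (n : ℕ) (hn : 2 ≤ n) (N : ℝ) (hN : 0 < N) (k : ℕ) :
    IntegrableOn (fun r => r ^ (n - 1) * (HH n N r * r ^ k)) (Set.Ioi 0) := by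
  have hm := HH_meas n N
  refine Integrable.mono' (p_integrable n hn k) (by fun_prop) ?_
  rw [ae_restrict_iff' measurableSet_Ioi]
  filter_upwards with r hr
  have h0 : 0 < r := hr
  have h2 := HH_nonneg n N r
  rw [Real.norm_of_nonneg (by positivity)]
  have := HH_le_EE n N r hN
  gcongr

lemma q_le_p (n : ℕ) (hn : 2 ≤ n) (N : ℝ) (hN : 0 < N) (k : ℕ) :
    ∫ r in Set.Ioi (0:ℝ), r ^ (n - 1) * (HH n N r * r ^ k) ≤
    ∫ r in Set.Ioi (0:ℝ), r ^ (n - 1) * (EE n r * r ^ k) := by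
  refine setIntegral_mono_on (q_integrable n hn N hN k) (p_integrable n hn k) measurableSet_Ioi ?_
  intro r hr
  have h0 : 0 < r := hr
  have := HH_le_EE n N r hN
  gcongr

lemma tail_fine (n : ℕ) (hn : 150 ≤ n) (r : ℝ) (hr : 2 * Real.sqrt (3 / 7 * n) < r) :
    r ^ (n - 1) * EE n r ≤ (2 * Real.sqrt (3 / 7 * n)) ^ (n - 1) / r ^ (n - 1) := by
  have ha := a_pos n (by omega)
  have hn' : (150:ℝ) ≤ n := by exact_mod_cast hn
  have ha8 : 8 ≤ Real.sqrt (3 / 7 * n) := by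
    apply Real.le_sqrt_of_sq_le; linarith
  rw [EE_outer n (by omega) r hr]
  set c := 2 * Real.sqrt (3 / 7 * n) with hc
  have hc0 : 0 < c := by positivity
  have hr0 : 0 < r := hc0.trans hr
  set b := Real.sqrt c with hb
  have hb4 : 4 ≤ b := by apply Real.le_sqrt_of_sq_le; linarith
  have hsb : b ≤ Real.sqrt r := Real.sqrt_le_sqrt hr.le
  -- s - b ≥ 4 log(s/b)
  have h1 : 2 * (Real.log r - Real.log c) ≤ Real.sqrt r - b := by
    have e1 : Real.log r = 2 * Real.log (Real.sqrt r) := by rw [Real.log_sqrt hr0.le]; ring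
    have e2 : Real.log c = 2 * Real.log b := by rw [hb, Real.log_sqrt hc0.le]; ring
    have e3 : Real.log (Real.sqrt r / b) = Real.log (Real.sqrt r) - Real.log b :=
      Real.log_div (by positivity) (by positivity)
    have e4 := Real.log_le_sub_one_of_pos (show 0 < Real.sqrt r / b by positivity)
    have e5 : 0 ≤ Real.sqrt r / b - 1 := by
      rw [sub_nonneg, le_div_iff₀ (by linarith)]; linarith
    have e6 : b * (Real.sqrt r / b - 1) = Real.sqrt r - b := by field_simp
    rw [e1, e2]
    nlinarith
  have key : Real.exp (-((n:ℝ) - 1) * (Real.sqrt r - b + Real.log c)) ≤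
      Real.exp (-((n:ℝ) - 1) * Real.log r) * Real.exp (-((n:ℝ) - 1) * Real.log r) /
       Real.exp (-((n:ℝ) - 1) * Real.log c) := by
    rw [← Real.exp_add, ← Real.exp_sub, Real.exp_le_exp]
    nlinarith
  rw [exp_neg_log n (by omega) r hr0, exp_neg_log n (by omega) c hc0] at key
  calc _ ≤ r ^ (n - 1) * ((r ^ (n - 1))⁻¹ * (r ^ (n - 1))⁻¹ / (c ^ (n - 1))⁻¹) := by gcongr
    _ = _ := by field_simp

lemma p_upper (n : ℕ) (hn : 150 ≤ n) (k : ℕ) (hk : k ≤ 2) :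
    ∫ r in Set.Ioi (0:ℝ), r ^ (n - 1) * (EE n r * r ^ k) ≤
      Real.sqrt (3 / 7 * n) ^ (k + 1) / (n + k) +
      ((2 * Real.sqrt (3 / 7 * n)) ^ (k + 1) - Real.sqrt (3 / 7 * n) ^ (k + 1)) / (k + 1) +
      (2 * Real.sqrt (3 / 7 * n)) ^ (k + 1) / (n - 2 - k) := by
  have ha := a_pos n (by omega)
  have hint := p_integrable n (by omega) k
  have hn' : (150:ℝ) ≤ n := by exact_mod_cast hn
  have hk' : (k:ℝ) ≤ 2 := by exact_mod_cast hk
  have hin := p_inner n (by omega)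
  have hmid := p_mid n (by omega)
  have hout := tail_fine n hn
  set a := Real.sqrt (3 / 7 * n) with hadef
  have hi1 : IntegrableOn (fun r => r ^ (n - 1) * (EE n r * r ^ k)) (Set.Ioc 0 a) :=
    hint.mono_set Set.Ioc_subset_Ioi_self
  have hi2 : IntegrableOn (fun r => r ^ (n - 1) * (EE n r * r ^ k)) (Set.Ioc a (2 * a)) :=
    hint.mono_set (fun x hx => ha.trans hx.1)
  have hi3 : IntegrableOn (fun r => r ^ (n - 1) * (EE n r * r ^ k)) (Set.Ioi (2 * a)) :=
    hint.mono_set (Set.Ioi_subset_Ioi (by positivity))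
  rw [← Set.Ioc_union_Ioi_eq_Ioi (show (0:ℝ) ≤ 2 * a by positivity),
    setIntegral_union (Set.Ioc_disjoint_Ioi le_rfl) measurableSet_Ioi
      (hint.mono_set Set.Ioc_subset_Ioi_self) hi3,
    ← Set.Ioc_union_Ioc_eq_Ioc ha.le (show a ≤ 2 * a by linarith),
    setIntegral_union (Set.Ioc_disjoint_Ioc_of_le le_rfl) measurableSet_Ioc hi1 hi2]
  refine add_le_add (add_le_add (le_of_eq ?_) (le_of_eq ?_)) ?_
  · have : ∫ r in Set.Ioc 0 a, r ^ (n - 1) * (EE n r * r ^ k) =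
        ∫ r in Set.Ioc 0 a, r ^ (n - 1 + k) / a ^ (n - 1) := by
      refine setIntegral_congr_fun measurableSet_Ioc ?_
      intro r hr
      simp only
      rw [← mul_assoc, hin r hr.2, pow_add]
      ring
    rw [this, ← intervalIntegral.integral_of_le ha.le, intervalIntegral.integral_div,
      integral_pow]
    have e : n - 1 + k + 1 = n - 1 + (k + 1) := by omega
    have e2 : ((n - 1 + k : ℕ) : ℝ) + 1 = n + k := by
      push_cast [show 1 ≤ n by omega]; ring
    rw [e2, e, zero_pow (n := n - 1 + (k + 1)) (by omega), pow_add a (n - 1) (k + 1)]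
    field_simp
    ring
  · have : ∫ r in Set.Ioc a (2 * a), r ^ (n - 1) * (EE n r * r ^ k) =
        ∫ r in Set.Ioc a (2 * a), r ^ k := by
      refine setIntegral_congr_fun measurableSet_Ioc ?_
      intro r hr
      simp only
      rw [← mul_assoc, hmid r hr.1 hr.2, one_mul]
    rw [this, ← intervalIntegral.integral_of_le (by linarith), integral_pow]
  · have hα : ((k:ℝ) - (n - 1)) < -1 := by linarith
    have hI := integrableOn_Ioi_rpow_of_lt hα (show 0 < 2 * a by positivity)
    have : ∫ r in Set.Ioi (2 * a), r ^ (n - 1) * (EE n r * r ^ k) ≤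
        ∫ r in Set.Ioi (2 * a), (2 * a) ^ (n - 1) * r ^ ((k:ℝ) - (n - 1)) := by
      refine setIntegral_mono_on hi3 (hI.const_mul _) measurableSet_Ioi ?_
      intro r hr
      have h0 : 0 < r := lt_trans (by positivity) (Set.mem_Ioi.1 hr)
      rw [← mul_assoc]
      have e : (n:ℝ) - 1 = ((n - 1 : ℕ) : ℝ) := by push_cast [show 1 ≤ n by omega]; ring
      rw [Real.rpow_sub h0, e, Real.rpow_natCast, Real.rpow_natCast]
      calc _ ≤ (2 * a) ^ (n - 1) / r ^ (n - 1) * r ^ k := by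
            gcongr
            exact hout r hr
        _ = _ := by ring
    refine this.trans (le_of_eq ?_)
    rw [integral_const_mul, integral_Ioi_rpow_of_lt hα (by positivity)]
    have e : (2 * a) ^ ((k:ℝ) - (n - 1) + 1) = (2 * a) ^ (k + 1) / (2 * a) ^ (n - 1) := by
      rw [← Real.rpow_natCast, ← Real.rpow_natCast, ← Real.rpow_sub (by positivity)]
      congr 1
      push_cast [show 1 ≤ n by omega]; ring
    rw [e]
    have e3 : (n:ℝ) - 2 - k ≠ 0 := by linarith
    have e4 : (k:ℝ) - (n - 1) + 1 ≠ 0 := by linarith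
    field_simp
    ring

lemma q_mid (n : ℕ) (hn : 3 ≤ n) (N : ℝ)
    (hN : (n : ℝ) ^ ((5 : ℝ) / 2) * (Real.log n) ^ 2 ≤ N) (hN1 : 1 ≤ N) (r : ℝ)
    (hr : Real.sqrt (3 / 7 * n) < r) (hr2 : r ≤ 2 * Real.sqrt (3 / 7 * n)) :
    1 - 1 / Real.sqrt n ≤ r ^ (n - 1) * HH n N r := by
  have hn' : (3:ℝ) ≤ n := by exact_mod_cast hn
  have ha1 : 1 ≤ Real.sqrt (3 / 7 * n) := by
    apply Real.le_sqrt_of_sq_le; linarith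
  have h2a : 2 * Real.sqrt (3 / 7 * n) ≤ n := by
    have : Real.sqrt (3 / 7 * n) ≤ n / 2 := by
      apply Real.sqrt_le_iff.2 ⟨by positivity, by nlinarith⟩
    linarith
  have hr0 : 0 < r := by linarith
  have hlog0 : 0 ≤ Real.log r := Real.log_nonneg (by linarith)
  have hlog : Real.log r ≤ Real.log n := Real.log_le_log hr0 (hr2.trans h2a)
  have hE := p_mid n (by omega) r hr hr2
  have hP := poly_ge_exp (((n:ℝ) - 1) * Real.log r) N hN1 (mul_nonneg (by linarith) hlog0)
  have hH : HH n N r = (max (1 - ((n : ℝ) - 1) * Real.log r / N) 0) ^ N := by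
    rw [HH, radialF, if_neg (not_le.2 hr), if_pos hr2]
  have hE2 : EE n r = Real.exp (-(((n:ℝ) - 1) * Real.log r)) := by
    rw [EE, radialF, if_neg (not_le.2 hr), if_pos hr2, neg_mul]
  rw [← hH, ← hE2] at hP
  have hs : 0 < Real.sqrt n := by positivity
  have hpow : (n:ℝ) ^ ((5:ℝ) / 2) = n ^ 2 * Real.sqrt n := by
    rw [show (5:ℝ) / 2 = 2 + 1 / 2 by norm_num, Real.rpow_add (by positivity), ← Real.sqrt_eq_rpow]
    simp
  have hb : (((n:ℝ) - 1) * Real.log r) ^ 2 / N ≤ 1 / Real.sqrt n := by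
    rw [div_le_div_iff₀ (by linarith) hs, one_mul]
    refine le_trans ?_ hN
    rw [hpow]
    have : (((n:ℝ) - 1) * Real.log r) ^ 2 ≤ (n * Real.log n) ^ 2 := by
      apply pow_le_pow_left₀ (mul_nonneg (by linarith) hlog0)
      apply mul_le_mul (by linarith) hlog hlog0 (by linarith)
    nlinarith
  calc 1 - 1 / Real.sqrt n ≤ (r ^ (n - 1) * EE n r) * (1 - (((n:ℝ) - 1) * Real.log r) ^ 2 / N) := by
        rw [hE]; linarith
    _ = r ^ (n - 1) * (EE n r * (1 - (((n:ℝ) - 1) * Real.log r) ^ 2 / N)) := by ring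
    _ ≤ _ := by gcongr

lemma q_lower (n : ℕ) (hn : 3 ≤ n) (N : ℝ)
    (hN : (n : ℝ) ^ ((5 : ℝ) / 2) * (Real.log n) ^ 2 ≤ N) (hN1 : 1 ≤ N) (k : ℕ) :
    (1 - 1 / Real.sqrt n) *
      (((2 * Real.sqrt (3 / 7 * n)) ^ (k + 1) - Real.sqrt (3 / 7 * n) ^ (k + 1)) / (k + 1)) ≤
    ∫ r in Set.Ioi (0:ℝ), r ^ (n - 1) * (HH n N r * r ^ k) := by
  have ha := a_pos n (by omega)
  have hint := q_integrable n (by omega) N (by linarith) k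
  have hmid := q_mid n hn N hN hN1
  set a := Real.sqrt (3 / 7 * n) with hadef
  have hsub : Set.Ioc a (2 * a) ⊆ Set.Ioi 0 := fun x hx => ha.trans hx.1
  have h1 : ∫ r in Set.Ioc a (2 * a), (1 - 1 / Real.sqrt n) * r ^ k ≤
      ∫ r in Set.Ioc a (2 * a), r ^ (n - 1) * (HH n N r * r ^ k) := by
    refine setIntegral_mono_on ?_ (hint.mono_set hsub) measurableSet_Ioc ?_
    · exact (Continuous.integrableOn_Ioc (by fun_prop))
    · intro r hr
      have h0 : 0 < r := hsub hr
      rw [← mul_assoc]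
      exact mul_le_mul_of_nonneg_right (hmid r hr.1 hr.2) (by positivity)
  have h2 : ∫ r in Set.Ioc a (2 * a), r ^ (n - 1) * (HH n N r * r ^ k) ≤
      ∫ r in Set.Ioi (0:ℝ), r ^ (n - 1) * (HH n N r * r ^ k) := by
    refine setIntegral_mono_set hint ?_ (LE.le.eventuallyLE hsub)
    rw [Filter.EventuallyLE, ae_restrict_iff' measurableSet_Ioi]
    filter_upwards with r hr
    have h0 : 0 < r := hr
    have := HH_nonneg n N r
    simp only [Pi.zero_apply]
    positivity
  refine le_trans (le_of_eq ?_) (h1.trans h2)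
  rw [integral_const_mul, ← intervalIntegral.integral_of_le (by linarith), integral_pow]

lemma q_lower_two (N : ℝ) (hN : 0 < N) :
    3 / 7 ≤ ∫ r in Set.Ioi (0:ℝ), r ^ (2 - 1) * (HH 2 N r * r ^ 0) := by
  have ha := a_pos 2 (by omega)
  have hint := q_integrable 2 (by omega) N (by linarith) 0
  have ha2 : Real.sqrt (3 / 7 * (2:ℕ)) ^ 2 = 6 / 7 := by rw [Real.sq_sqrt (by positivity)]; norm_num
  have hH : ∀ r, r ≤ Real.sqrt (3 / 7 * (2:ℕ)) → 1 ≤ HH 2 N r := by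
    intro r hr
    rw [HH, radialF, if_pos hr]
    apply Real.one_le_rpow _ hN.le
    refine le_trans ?_ (le_max_left _ _)
    have : Real.log (Real.sqrt (3 / 7 * (2:ℕ))) ≤ 0 := by
      apply Real.log_nonpos ha.le
      nlinarith
    have h3 : (((2:ℕ):ℝ) - 1) * Real.log (Real.sqrt (3 / 7 * (2:ℕ))) / N ≤ 0 := by
      apply div_nonpos_of_nonpos_of_nonneg _ hN.le
      push_cast at this ⊢
      linarith
    linarith
  set a := Real.sqrt (3 / 7 * (2:ℕ)) with hadef
  have hsub : Set.Ioc 0 a ⊆ Set.Ioi 0 := Set.Ioc_subset_Ioi_self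
  have h1 : ∫ r in Set.Ioc 0 a, r ^ 1 ≤
      ∫ r in Set.Ioc 0 a, r ^ (2 - 1) * (HH 2 N r * r ^ 0) := by
    refine setIntegral_mono_on ?_ (hint.mono_set hsub) measurableSet_Ioc ?_
    · exact (Continuous.integrableOn_Ioc (by fun_prop))
    · intro r hr
      have h0 : 0 < r := hsub hr
      have := hH r hr.2
      simp only [pow_zero, mul_one, Nat.reduceSub, pow_one]
      nlinarith
  have h2 : ∫ r in Set.Ioc 0 a, r ^ (2 - 1) * (HH 2 N r * r ^ 0) ≤
      ∫ r in Set.Ioi (0:ℝ), r ^ (2 - 1) * (HH 2 N r * r ^ 0) := by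
    refine setIntegral_mono_set hint ?_ (LE.le.eventuallyLE hsub)
    rw [Filter.EventuallyLE, ae_restrict_iff' measurableSet_Ioi]
    filter_upwards with r hr
    have h0 : 0 < r := hr
    have := HH_nonneg 2 N r
    simp only [Pi.zero_apply]
    positivity
  refine le_trans (le_of_eq ?_) (h1.trans h2)
  rw [← intervalIntegral.integral_of_le ha.le, integral_pow]
  simp only [Nat.reduceAdd]
  rw [ha2]; norm_num

lemma N_ge_one (n : ℕ) (hn : 3 ≤ n) (N : ℝ)
    (hN : (n : ℝ) ^ ((5 : ℝ) / 2) * (Real.log n) ^ 2 ≤ N) : 1 ≤ N := by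
  have hn' : (3:ℝ) ≤ n := by exact_mod_cast hn
  have h1 : 1 ≤ Real.log n := by
    rw [Real.le_log_iff_exp_le (by linarith)]
    linarith [Real.exp_one_lt_d9]
  have h2 : 1 ≤ (n : ℝ) ^ ((5 : ℝ) / 2) := Real.one_le_rpow (by linarith) (by norm_num)
  nlinarith

lemma N_pos (n : ℕ) (hn : 2 ≤ n) (N : ℝ)
    (hN : (n : ℝ) ^ ((5 : ℝ) / 2) * (Real.log n) ^ 2 ≤ N) : 0 < N := by
  have hn' : (2:ℝ) ≤ n := by exact_mod_cast hn
  have h1 : 0 < Real.log n := Real.log_pos (by linarith)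
  refine lt_of_lt_of_le ?_ hN
  positivity

lemma small_bound (n : ℕ) (hn : 2 ≤ n) : ∃ K : ℝ, 0 ≤ K ∧ ∀ N : ℝ,
    (n : ℝ) ^ ((5 : ℝ) / 2) * (Real.log n) ^ 2 ≤ N →
    0 < (∫ r in Set.Ioi (0:ℝ), r ^ (n - 1) * HH n N r) ∧
    ∫ r in Set.Ioi (0:ℝ), r ^ (n - 1) * (HH n N r * r ^ 2) ≤
      K * ∫ r in Set.Ioi (0:ℝ), r ^ (n - 1) * HH n N r := by
  have hlow : ∃ c : ℝ, 0 < c ∧ ∀ N : ℝ, (n : ℝ) ^ ((5 : ℝ) / 2) * (Real.log n) ^ 2 ≤ N →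
      c ≤ ∫ r in Set.Ioi (0:ℝ), r ^ (n - 1) * HH n N r := by
    rcases hn.eq_or_lt with h | h
    · subst h
      refine ⟨3 / 7, by norm_num, fun N hN => ?_⟩
      simpa using q_lower_two N (N_pos 2 le_rfl N hN)
    · refine ⟨(1 - 1 / Real.sqrt n) * Real.sqrt (3 / 7 * n), ?_, fun N hN => ?_⟩
      · have h1 : 1 < Real.sqrt n := by
          rw [Real.lt_sqrt (by norm_num)]; simp; omega
        have h2 : 1 / Real.sqrt n < 1 := by
          rw [div_lt_one (by linarith)]; exact h1
        exact mul_pos (by linarith) (a_pos n (by omega))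
      · have := q_lower n h N hN (N_ge_one n h N hN) 0
        simp only [pow_zero, mul_one, zero_add, pow_one, Nat.cast_zero, div_one] at this
        refine le_trans (le_of_eq ?_) this
        ring
  obtain ⟨c, hc, hl⟩ := hlow
  set I := ∫ r in Set.Ioi (0:ℝ), r ^ (n - 1) * (EE n r * r ^ 2) with hI
  have hI0 : 0 ≤ I := by
    refine setIntegral_nonneg measurableSet_Ioi fun r hr => ?_
    have h0 : 0 < r := hr
    have := EE_nonneg n r
    positivity
  refine ⟨I / c, by positivity, fun N hN => ?_⟩
  have h1 := hl N hN
  refine ⟨by linarith, (q_le_p n hn N (N_pos n hn N hN) 2).trans ?_⟩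
  rw [← hI]
  calc I = I / c * c := by field_simp
    _ ≤ _ := by gcongr

set_option maxHeartbeats 1000000 in
lemma large_bound (n : ℕ) (hn : 150 ≤ n) (N : ℝ)
    (hN : (n : ℝ) ^ ((5 : ℝ) / 2) * (Real.log n) ^ 2 ≤ N) (P Q I : ℝ)
    (hP : P = ∫ r in Set.Ioi (0:ℝ), r ^ (n - 1) * EE n r)
    (hQ : Q = ∫ r in Set.Ioi (0:ℝ), r ^ (n - 1) * HH n N r)
    (hI : I = ∫ r in Set.Ioi (0:ℝ), r ^ (n - 1) * (HH n N r * r ^ 2)) :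
    0 < Q ∧ Q ≤ P ∧ (P - Q) / P ≤ 100 / Real.sqrt n ∧ |I / (n * Q) - 1| ≤ 100 / Real.sqrt n := by
  have hn' : (150:ℝ) ≤ n := by exact_mod_cast hn
  have hN1 := N_ge_one n (by omega) N hN
  have q0 := q_lower n (by omega) N hN hN1 0
  have q2 := q_lower n (by omega) N hN hN1 2
  have p0 := p_upper n hn 0 (by norm_num)
  have p2 := p_upper n hn 2 (by norm_num)
  have qp0 := q_le_p n (by omega) N (by linarith) 0
  have qp2 := q_le_p n (by omega) N (by linarith) 2
  have ha := a_pos n (by omega)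
  simp only [pow_zero, mul_one, zero_add, pow_one, Nat.cast_zero, div_one, add_zero, sub_zero]
    at q0 p0 qp0
  rw [← hQ] at q0 qp0
  rw [← hP] at p0 qp0
  rw [← hI] at q2 qp2
  have I_up := qp2.trans p2
  clear qp2 p2
  have ha2 : Real.sqrt (3 / 7 * n) ^ 2 = 3 / 7 * n := Real.sq_sqrt (by positivity)
  set a := Real.sqrt (3 / 7 * n) with hadef
  have hs : 0 < Real.sqrt n := by positivity
  have hs2 : Real.sqrt n ^ 2 = n := Real.sq_sqrt (by positivity)
  have hs12 : 12 ≤ Real.sqrt n := by apply Real.le_sqrt_of_sq_le; linarith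
  rw [show (100:ℝ) / Real.sqrt n = 100 * (1 / Real.sqrt n) by ring]
  set δ := 1 / Real.sqrt n with hδ
  have hδ0 : 0 < δ := by positivity
  have hδ12 : δ ≤ 1 / 12 := by rw [hδ]; gcongr
  have hδn : δ ^ 2 = 1 / n := by rw [hδ, div_pow, hs2]; norm_num
  have hnδ : 1 / (n:ℝ) ≤ δ / 12 := by rw [← hδn]; nlinarith
  push_cast at q2 I_up
  -- tidy bounds
  have t1 : 2 * a / (n - 2) ≤ a * (4 * (1 / n)) := by
    rw [div_le_iff₀ (by linarith)]
    have : (1:ℝ) / n * n = 1 := by field_simp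
    have h3 : 1 / (n:ℝ) * (n - 2) ≥ 1 / 2 := by
      rw [ge_iff_le, div_mul_eq_mul_div, div_le_div_iff₀ (by norm_num) (by linarith)]; linarith
    nlinarith
  have t2 : a / n = a * (1 / n) := by ring
  have hPu : P ≤ a * (1 + 5 * (1 / n)) := by linarith
  have t3 : (2 * a) ^ (2 + 1) / (n - 2 - 2) ≤ a ^ 3 * (16 * (1 / n)) := by
    rw [div_le_iff₀ (by linarith)]
    have h3 : 1 / (n:ℝ) * (n - 2 - 2) ≥ 1 / 2 := by
      rw [ge_iff_le, div_mul_eq_mul_div, div_le_div_iff₀ (by norm_num) (by linarith)]; linarith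
    have ha3 : 0 < a ^ 3 := by positivity
    nlinarith
  have t4 : a ^ (2 + 1) / (n + 2) ≤ a ^ 3 * (1 / n) := by
    rw [div_eq_mul_one_div]
    gcongr
    linarith
  have hIu : I ≤ a ^ 3 * (7 / 3 + 17 * (1 / n)) := by
    have : ((2 * a) ^ (2 + 1) - a ^ (2 + 1)) / (2 + 1) = a ^ 3 * (7 / 3) := by ring
    rw [this] at I_up
    linarith
  have hIl : (1 - δ) * (a ^ 3 * (7 / 3)) ≤ I := by
    refine le_trans (le_of_eq ?_) q2
    ring
  have hQl : (1 - δ) * a ≤ Q := by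
    refine le_trans (le_of_eq ?_) q0
    ring
  have ha3 : 0 < a ^ 3 := by positivity
  have hQa : 11 / 12 * a ≤ Q := by nlinarith
  have hQ0 : 0 < Q := by linarith
  have hnQ : n * Q = 7 / 3 * a ^ 2 * Q := by rw [ha2]; ring
  have hPu' : P ≤ a * (1 + 5 * (δ / 12)) := hPu.trans (by gcongr)
  have hIu' : I ≤ a ^ 3 * (7 / 3 + 17 * (δ / 12)) := hIu.trans (by gcongr)
  refine ⟨hQ0, qp0, ?_, ?_⟩
  · rw [div_le_iff₀ (by linarith)]
    have hm : 100 * δ * (11 / 12 * a) ≤ 100 * δ * P := by gcongr; linarith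
    have := mul_pos ha hδ0
    linarith
  · have hpos : 0 < n * Q := by positivity
    have : I / (n * Q) - 1 = (I - n * Q) / (n * Q) := by field_simp
    rw [this, abs_div, abs_of_pos hpos, div_le_iff₀ hpos, hnQ]
    have hl : 7 / 3 * a ^ 2 * ((1 - δ) * a) ≤ 7 / 3 * a ^ 2 * Q := by gcongr
    have hl2 : 7 / 3 * a ^ 2 * (11 / 12 * a) ≤ 7 / 3 * a ^ 2 * Q := by gcongr
    have hu : 7 / 3 * a ^ 2 * Q ≤ 7 / 3 * a ^ 2 * (a * (1 + 5 * (δ / 12))) := by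
      gcongr; linarith
    have hm : 100 * δ * (7 / 3 * a ^ 2 * (11 / 12 * a)) ≤ 100 * δ * (7 / 3 * a ^ 2 * Q) := by gcongr
    have hd := mul_pos ha3 hδ0
    rw [abs_le]
    constructor <;> linarith

lemma tv_bound (P Q F G : ℝ) (hQ : 0 < Q) (hQP : Q ≤ P) (hG0 : 0 ≤ G) (hGF : G ≤ F)
    (hFG : F - G ≤ P - Q) (hGQ : G ≤ Q) : |F / P - G / Q| ≤ (P - Q) / P := by
  have hP : 0 < P := by linarith
  have e : F / P - G / Q = ((F - G) - (G / Q) * (P - Q)) / P := by field_simp; ring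
  rw [e, abs_div, abs_of_pos hP]
  have h1 : 0 ≤ G / Q := by positivity
  have h2 : G / Q ≤ 1 := by rw [div_le_one hQ]; exact hGQ
  gcongr
  rw [abs_le]
  constructor <;> nlinarith

/-- Comparison of the density `e^{-(n-1)f(|x|)}` with its polynomial approximation
`(1 - (n-1)f(|x|)/N)₊^N` for `N ≥ n^{5/2} log²n`: the approximating measure is
essentially isotropic (with error `C/√n`), and the distributions of the norms are
within `C/√n` of each other. -/
theorem polynomial_approximation_radial :
    ∃ C : ℝ, 0 < C ∧
      ∀ n : ℕ, 1 ≤ n →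
        ∀ N : ℝ, (n : ℝ) ^ ((5 : ℝ) / 2) * (Real.log n) ^ 2 ≤ N →
          ∀ (Cn Cn' : ℝ) (μ μt : Measure (Fin n → ℝ)),
            μ = (volume : Measure (Fin n → ℝ)).withDensity
              (fun x => ENNReal.ofReal (Cn * Real.exp (-((n : ℝ) - 1) *
                radialF (Real.sqrt (3 / 7 * n)) (Real.sqrt (∑ i, (x i) ^ 2))))) →
            μt = (volume : Measure (Fin n → ℝ)).withDensity
              (fun x => ENNReal.ofReal (Cn' *
                (max (1 - ((n : ℝ) - 1) *
                  radialF (Real.sqrt (3 / 7 * n)) (Real.sqrt (∑ i, (x i) ^ 2)) / N) 0) ^ N)) →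
            IsProbabilityMeasure μ →
            IsProbabilityMeasure μt →
            (∃ ε : ℝ, |ε| ≤ C / Real.sqrt n ∧
                ∀ i j, ∫ x, x i * x j ∂μt = (1 + ε) * (if i = j then 1 else 0)) ∧
              ∀ t : ℝ,
                |(μ {x | Real.sqrt (∑ i, (x i) ^ 2) ≤ t}).toReal -
                    (μt {x | Real.sqrt (∑ i, (x i) ^ 2) ≤ t}).toReal| ≤
                  C / Real.sqrt n := by
  have hsb : ∀ n : ℕ, ∃ K : ℝ, 0 ≤ K ∧ (2 ≤ n → ∀ N : ℝ,
      (n : ℝ) ^ ((5 : ℝ) / 2) * (Real.log n) ^ 2 ≤ N →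
      0 < (∫ r in Set.Ioi (0:ℝ), r ^ (n - 1) * HH n N r) ∧
      ∫ r in Set.Ioi (0:ℝ), r ^ (n - 1) * (HH n N r * r ^ 2) ≤
        K * ∫ r in Set.Ioi (0:ℝ), r ^ (n - 1) * HH n N r) := by
    intro n
    by_cases hn : 2 ≤ n
    · obtain ⟨K, h, h'⟩ := small_bound n hn
      exact ⟨K, h, fun _ => h'⟩
    · exact ⟨0, le_rfl, fun h => absurd h hn⟩
  choose K hK0 hK using hsb
  have hS0 : 0 ≤ ∑ n ∈ Finset.range 150, (1 + K n) :=
    Finset.sum_nonneg fun n _ => by linarith [hK0 n]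
  refine ⟨13 * (∑ n ∈ Finset.range 150, (1 + K n)) + 100, by linarith, ?_⟩
  intro n hn1 N hN Cn Cn' μ μt hμ hμt hp hpt
  have hn0 : (1:ℝ) ≤ n := by exact_mod_cast hn1
  rcases hn1.eq_or_lt with h | hn
  · -- `n = 1`: the density is constant, which is impossible
    exfalso
    subst h
    have h1 := hp.measure_univ
    rw [hμ] at h1
    simp only [Nat.cast_one, sub_self, neg_zero, zero_mul, Real.exp_zero, mul_one,
      withDensity_const, Measure.smul_apply, smul_eq_mul] at h1
    have hv : (volume : Measure (Fin 1 → ℝ)) Set.univ = ⊤ := by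
      simp
    rw [hv] at h1
    by_cases hc : ENNReal.ofReal Cn = 0
    · simp [hc] at h1
    · rw [ENNReal.mul_top hc] at h1
      simp at h1
  have hn2 : 2 ≤ n := hn
  have hNpos := N_pos n hn2 N hN
  have hi := q_integrable n hn2 N hNpos 2
  have hiso := dens_iso n hn1 (HH n N) (HH_meas n N) (HH_nonneg n N) Cn' μt hμt hpt hi
  have hs : 0 < Real.sqrt n := by positivity
  set Q := ∫ r in Set.Ioi (0:ℝ), r ^ (n - 1) * HH n N r with hQ
  set I := ∫ r in Set.Ioi (0:ℝ), r ^ (n - 1) * (HH n N r * r ^ 2) with hI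
  rcases lt_or_ge n 150 with hlt | hge
  · have hs13 : Real.sqrt n ≤ 13 := by
      have : (n:ℝ) < 150 := by exact_mod_cast hlt
      rw [Real.sqrt_le_iff]; constructor <;> linarith
    have hle : 1 + K n ≤ ∑ n ∈ Finset.range 150, (1 + K n) :=
      Finset.single_le_sum (f := fun n => 1 + K n) (fun n _ => by linarith [hK0 n])
        (Finset.mem_range.2 hlt)
    obtain ⟨hQ0, hIQ⟩ := hK n hn2 N hN
    rw [← hQ] at hQ0 hIQ
    rw [← hI] at hIQ
    have hKn := hK0 n
    constructor
    · refine ⟨I / (n * Q) - 1, ?_, fun i j => ?_⟩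
      · have hI0 : 0 ≤ I := by
          refine setIntegral_nonneg measurableSet_Ioi fun r hr => ?_
          have h0 : 0 < r := hr
          have := HH_nonneg n N r
          positivity
        have h1 : 0 ≤ I / (n * Q) := by positivity
        have h2 : I / (n * Q) ≤ K n := by
          rw [div_le_iff₀ (by positivity)]
          have : K n * Q ≤ K n * (n * Q) := by gcongr; nlinarith
          linarith
        have h3 : |I / (n * Q) - 1| ≤ 1 + K n := by
          rw [abs_le]; constructor <;> linarith
        refine h3.trans ?_
        rw [le_div_iff₀ hs]
        have : (1 + K n) * Real.sqrt n ≤ (1 + K n) * 13 := by gcongr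
        linarith
      · rw [hiso i j]; ring
    · intro t
      have h1 : (μ {x | Real.sqrt (∑ i, (x i) ^ 2) ≤ t}).toReal ≤ 1 := measureReal_le_one
      have h2 : (μt {x | Real.sqrt (∑ i, (x i) ^ 2) ≤ t}).toReal ≤ 1 := measureReal_le_one
      have h3 : 0 ≤ (μ {x | Real.sqrt (∑ i, (x i) ^ 2) ≤ t}).toReal := ENNReal.toReal_nonneg
      have h4 : 0 ≤ (μt {x | Real.sqrt (∑ i, (x i) ^ 2) ≤ t}).toReal := ENNReal.toReal_nonneg
      refine le_trans (b := 1) ?_ ?_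
      · rw [abs_le]; constructor <;> linarith
      · rw [le_div_iff₀ hs]; linarith
  · obtain ⟨hQ0, hQP, hPQ, hε⟩ := large_bound n hge N hN _ Q I rfl hQ hI
    have hC : 100 / Real.sqrt n ≤
        (13 * (∑ n ∈ Finset.range 150, (1 + K n)) + 100) / Real.sqrt n := by
      gcongr; linarith
    constructor
    · refine ⟨I / (n * Q) - 1, hε.trans hC, fun i j => ?_⟩
      rw [hiso i j]; ring
    · intro t
      rw [dens_prob n hn1 (EE n) (EE_meas n) (EE_nonneg n) Cn μ hμ hp,
        dens_prob n hn1 (HH n N) (HH_meas n N) (HH_nonneg n N) Cn' μt hμt hpt]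
      refine le_trans (tv_bound _ _ _ _ hQ0 hQP ?_ ?_ ?_ ?_) (hPQ.trans hC)
      all_goals
        have ip : IntegrableOn (fun r => r ^ (n - 1) * EE n r) (Set.Ioi 0) := by
          simpa using p_integrable n hn2 0
        have iq : IntegrableOn (fun r => r ^ (n - 1) * HH n N r) (Set.Ioi 0) := by
          simpa using q_integrable n hn2 N hNpos 0
        have ep : (fun r => r ^ (n - 1) * (EE n r * (Set.Iic t).indicator 1 r)) =
            (Set.Iic t).indicator (fun r => r ^ (n - 1) * EE n r) := by
          ext r; by_cases h : r ∈ Set.Iic t <;> simp [Set.indicator, h]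
        have eq : (fun r => r ^ (n - 1) * (HH n N r * (Set.Iic t).indicator 1 r)) =
            (Set.Iic t).indicator (fun r => r ^ (n - 1) * HH n N r) := by
          ext r; by_cases h : r ∈ Set.Iic t <;> simp [Set.indicator, h]
        have jp := ip.indicator (measurableSet_Iic (a := t))
        have jq := iq.indicator (measurableSet_Iic (a := t))
        rw [← ep] at jp
        rw [← eq] at jq
        have hind : ∀ r : ℝ, 0 ≤ (Set.Iic t).indicator (1 : ℝ → ℝ) r ∧
            (Set.Iic t).indicator (1 : ℝ → ℝ) r ≤ 1 := by
          intro r; by_cases h : r ∈ Set.Iic t <;> simp [Set.indicator, h]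
      · refine setIntegral_nonneg measurableSet_Ioi fun r hr => ?_
        have h0 : 0 < r := hr
        have := HH_nonneg n N r
        have := (hind r).1
        positivity
      · refine setIntegral_mono_on jq jp measurableSet_Ioi fun r hr => ?_
        have h0 : 0 < r := hr
        have := HH_le_EE n N r hNpos
        have := (hind r).1
        gcongr
      · rw [← integral_sub jp jq, ← integral_sub ip iq]
        refine setIntegral_mono_on (jp.sub jq) (ip.sub iq) measurableSet_Ioi fun r hr => ?_
        have h0 : 0 < r := hr
        have h1 := HH_le_EE n N r hNpos
        obtain ⟨h2, h3⟩ := hind r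
        have h4 : 0 ≤ r ^ (n - 1) * (EE n r - HH n N r) :=
          mul_nonneg (by positivity) (by linarith)
        nlinarith
      · refine setIntegral_mono_on jq iq measurableSet_Ioi fun r hr => ?_
        have h0 : 0 < r := hr
        have h1 := HH_nonneg n N r
        gcongr
        exact mul_le_of_le_one_right h1 (hind r).2
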